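/- Let H₁ and H₂ be finite-dimensional complex Hilbert spaces, H = H₁ ⊗ H₂, d₂ = dim H₂, and let f : (0,∞) → ℝ be a matrix entropy. Then for every positive definite operator ρ on H and every self-adjoint operator h on H, Tr₁( h₁* · Df'(ρ₁) h₁ ) ≤ d₂ · Tr₁₂( h* · Df'(d₂ρ) h ), where ρ₁ = Tr₂ ρ and h₁ = Tr₂ h are the partial traces over H₂. -/

import Mathlib

open Matrix
open scoped ComplexOrder

attribute [local instance] Matrix.normedAddCommGroup Matrix.normedSpace

/-- The matrix function induced by `f : ℝ → ℝ` via the functional calculus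
(defined to be `0` on non-Hermitian matrices). -/
noncomputable def matFun {m : Type*} [Fintype m] [DecidableEq m] (f : ℝ → ℝ)
    (x : Matrix m m ℂ) : Matrix m m ℂ :=
  if hx : x.IsHermitian then
    (hx.eigenvectorUnitary : Matrix m m ℂ) *
      Matrix.diagonal (fun i => (f (hx.eigenvalues i) : ℂ)) *
      star (hx.eigenvectorUnitary : Matrix m m ℂ)
  else 0

/-- `D` is the (complex-linear extension of the) Fréchet differential at `x` of the matrix
function induced by `f`, the differential being taken within the real subspace of
Hermitian matrices. -/
noncomputable def IsFDerivMatFun {m : Type*} [Fintype m] [DecidableEq m] (f : ℝ → ℝ)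
    (x : Matrix m m ℂ) (D : Matrix m m ℂ →L[ℂ] Matrix m m ℂ) : Prop :=
  HasFDerivWithinAt (matFun f) (D.restrictScalars ℝ) {y : Matrix m m ℂ | y.IsHermitian} x

/-- `f : (0,∞) → ℝ` (given together with its derivative `f'`) is a matrix entropy:
it is twice continuously differentiable and for every `n` the map
`(x, h) ↦ Tr (h* ⬝ (Df' x) h)` is jointly convex in pairs `(x, h)` of an `n × n`
positive definite matrix `x` and an arbitrary `n × n` matrix `h`. -/
noncomputable def IsMatrixEntropy (f f' : ℝ → ℝ) : Prop :=
  ContDiffOn ℝ 2 f (Set.Ioi 0) ∧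
  (∀ t ∈ Set.Ioi (0 : ℝ), HasDerivAt f (f' t) t) ∧
  ∀ (n : ℕ)
    (D : Matrix (Fin n) (Fin n) ℂ → (Matrix (Fin n) (Fin n) ℂ →L[ℂ] Matrix (Fin n) (Fin n) ℂ)),
    (∀ x : Matrix (Fin n) (Fin n) ℂ, x.PosDef → IsFDerivMatFun f' x (D x)) →
    ConvexOn ℝ {q : Matrix (Fin n) (Fin n) ℂ × Matrix (Fin n) (Fin n) ℂ | q.1.PosDef}
      (fun q => (Matrix.trace (q.2ᴴ * (D q.1) q.2)).re)

/-- The partial trace over the second tensor factor. -/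
noncomputable def ptrace {ι₁ ι₂ : Type*} [Fintype ι₂]
    (ρ : Matrix (ι₁ × ι₂) (ι₁ × ι₂) ℂ) : Matrix ι₁ ι₁ ℂ :=
  Matrix.of fun i j => ∑ k : ι₂, ρ (i, k) (j, k)

/-!
Averaging `V X Vᴴ` over the signed permutation matrices `V` gives `(Tr X / d) • 1`, so averaging the
conjugates of `d₂ρ` by `1 ⊗ V` gives `ρ₁ ⊗ 1`, and likewise `d₂h` gives `h₁ ⊗ 1`. The form
`(x, h) ↦ Tr (h* ⬝ Df'(x) h)` is invariant under simultaneous unitary conjugation of `x` and `h`, so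
by Jensen's inequality its value at `(ρ₁ ⊗ 1, h₁ ⊗ 1)` is at most its value at `(d₂ρ, d₂h)`. Since
`Df'` commutes with the embedding `A ↦ A ⊗ 1`, the former is `d₂` times the value at `(ρ₁, h₁)`, and
the latter is `d₂²` times the value at `(d₂ρ, h)`.

Convexity can only be applied once `Df'` is known to exist at every positive definite matrix. For
`a` with finite spectrum and spectral projections `P_s`, the divided differences `g[s, ·]` satisfy
`g(b) - g(a) = ∑ s, P_s (b - a) g[s, b]`, and continuity of `b ↦ g[s, b]` at `a` turns this into the
derivative.
-/

section CfcDerivative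

open Filter Topology ContinuousLinearMap

section Eigenprojection

variable {A : Type*} [Ring A] [StarRing A] [TopologicalSpace A] [Algebra ℝ A] {p : A → Prop}
  [ContinuousFunctionalCalculus ℝ A p]

/-- The spectral projection of `a` at the point `s`, the indicator function of `{s}` applied to
`a`. It is only meaningful when `s` is an isolated point of the spectrum, since otherwise the
indicator is discontinuous there and `cfc` returns `0`. -/
noncomputable def eigenprojection (a : A) (s : ℝ) : A :=
  cfc (Pi.single s 1) a

theorem sum_eigenprojection {a : A} (ha : p a) (hfin : (spectrum ℝ a).Finite) :
    ∑ s ∈ hfin.toFinset, eigenprojection a s = 1 := by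
  simp only [eigenprojection]
  rw [← cfc_sum _ _ _ fun _ _ => hfin.continuousOn _, ← cfc_const_one ℝ a]
  refine cfc_congr fun t ht => ?_
  simp [Finset.sum_apply, Pi.single_apply, ht]

theorem eigenprojection_mul_cfc {a : A} (hfin : (spectrum ℝ a).Finite) (g : ℝ → ℝ) (s : ℝ) :
    eigenprojection a s * cfc g a = g s • eigenprojection a s := by
  rw [eigenprojection, ← cfc_mul _ _ _ (hfin.continuousOn _) (hfin.continuousOn _),
    ← cfc_smul _ _ _ (hfin.continuousOn _)]
  refine cfc_congr fun t _ => ?_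
  obtain rfl | hts := eq_or_ne t s <;> simp [*]

theorem mul_cfc_dslope {b : A} (hb : p b) {g : ℝ → ℝ} (hg : ContinuousOn g (spectrum ℝ b)) {s : ℝ}
    (hgs : ContinuousOn (dslope g s) (spectrum ℝ b)) :
    b * cfc (dslope g s) b = s • cfc (dslope g s) b + cfc g b - g s • 1 := by
  have hslope : cfc (fun t => (t - s) * dslope g s t) b = cfc (fun t => g t - g s) b :=
    cfc_congr fun t _ => sub_smul_dslope g s t
  rw [cfc_mul _ _ _ (by fun_prop) hgs, cfc_sub _ _ _ (by fun_prop) (by fun_prop),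
    cfc_sub _ _ _ hg (by fun_prop), cfc_id' ℝ b, cfc_const s b, cfc_const (g s) b,
    Algebra.algebraMap_eq_smul_one, Algebra.algebraMap_eq_smul_one, sub_mul, smul_mul_assoc,
    one_mul, sub_eq_iff_eq_add] at hslope
  rw [hslope]
  abel

theorem cfc_sub_cfc_eq_sum {a b : A} (ha : p a) (hb : p b) (hfin : (spectrum ℝ a).Finite)
    {g : ℝ → ℝ} (hg : ContinuousOn g (spectrum ℝ b))
    (hdg : ∀ s ∈ spectrum ℝ a, ContinuousOn (dslope g s) (spectrum ℝ b)) :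
    cfc g b - cfc g a =
      ∑ s ∈ hfin.toFinset, eigenprojection a s * (b - a) * cfc (dslope g s) b := by
  have hsummand : ∀ s ∈ hfin.toFinset, eigenprojection a s * (b - a) * cfc (dslope g s) b =
      eigenprojection a s * (cfc g b - cfc g a) := fun s hs => by
    have hPa : eigenprojection a s * a = s • eigenprojection a s := by
      simpa only [cfc_id ℝ a, id] using eigenprojection_mul_cfc hfin id s
    rw [mul_sub, sub_mul, mul_assoc, mul_cfc_dslope hb hg (hdg s (hfin.mem_toFinset.mp hs)), hPa]
    simp only [mul_sub, mul_add, eigenprojection_mul_cfc hfin, mul_smul_comm, smul_mul_assoc,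
      mul_one]
    abel
  rw [Finset.sum_congr rfl hsummand, ← Finset.sum_mul, sum_eigenprojection ha hfin, one_mul]

end Eigenprojection

variable {A : Type*} [CStarAlgebra A] {U : Set ℝ} {g : ℝ → ℝ} {a : A}

theorem eventually_spectrum_subset (hU : IsOpen U) (ha : spectrum ℝ a ⊆ U) :
    ∀ᶠ b in 𝓝 a, spectrum ℝ b ⊆ U :=
  (upperHemicontinuous_spectrum ℝ A).upperHemicontinuousAt a U (hU.mem_nhdsSet.mpr ha) |>.mono
    fun _ => subset_of_mem_nhdsSet

theorem continuousWithinAt_cfc_isSelfAdjoint (hU : IsOpen U) (hg : ContinuousOn g U)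
    (ha : IsSelfAdjoint a) (haU : spectrum ℝ a ⊆ U) :
    ContinuousWithinAt (fun b : A => cfc g b) {b | IsSelfAdjoint b} a := by
  have hcont : ContinuousOn (fun b : A => cfc g b)
      ({b | IsSelfAdjoint b} ∩ {b | spectrum ℝ b ⊆ U}) :=
    continuousOn_id.cfc_of_mem_nhdsSet g
      (hU.mem_nhdsSet.mpr <| Set.iUnion₂_subset fun _ hb => hb.2) (fun _ hb => hb.1) hg
  exact (continuousWithinAt_inter (eventually_spectrum_subset hU haU)).mp (hcont a ⟨ha, haU⟩)

theorem hasFDerivWithinAt_cfc (hU : IsOpen U) (hg : DifferentiableOn ℝ g U)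
    (ha : IsSelfAdjoint a) (hfin : (spectrum ℝ a).Finite) (haU : spectrum ℝ a ⊆ U) :
    HasFDerivWithinAt (fun b : A => cfc g b)
      ((∑ s ∈ hfin.toFinset,
        mulLeftRight ℂ A (eigenprojection a s) (cfc (dslope g s) a)).restrictScalars ℝ)
      {b | IsSelfAdjoint b} a := by
  have hdslope : ∀ s ∈ spectrum ℝ a, ContinuousOn (dslope g s) U := fun s hs =>
    (continuousOn_dslope (hU.mem_nhds (haU hs))).mpr
      ⟨hg.continuousOn, hg.differentiableAt (hU.mem_nhds (haU hs))⟩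
  have hremainder : (fun b => ∑ s ∈ hfin.toFinset, eigenprojection a s * (b - a) *
      (cfc (dslope g s) b - cfc (dslope g s) a)) =o[𝓝[{b | IsSelfAdjoint b}] a]
        fun b => b - a := by
    refine Asymptotics.IsLittleO.fun_sum fun s hs => ?_
    have hbigO : (fun b => eigenprojection a s * (b - a)) =O[𝓝[{b | IsSelfAdjoint b}] a]
        fun b => ‖b - a‖ :=
      .of_bound ‖eigenprojection a s‖ <| .of_forall fun b => by
        simpa only [norm_norm] using norm_mul_le (eigenprojection a s) (b - a)
    have hsmall : (fun b => cfc (dslope g s) b - cfc (dslope g s) a)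
        =o[𝓝[{b | IsSelfAdjoint b}] a] fun _ => (1 : ℝ) :=
      (Asymptotics.isLittleO_one_iff ℝ).mpr <| tendsto_sub_nhds_zero_iff.mpr <|
        continuousWithinAt_cfc_isSelfAdjoint hU (hdslope s (hfin.mem_toFinset.mp hs)) ha haU
    simpa only [mul_one, Asymptotics.isLittleO_norm_right] using hbigO.mul_isLittleO hsmall
  rw [hasFDerivWithinAt_iff_isLittleO]
  refine hremainder.congr' ?_ .rfl
  filter_upwards [self_mem_nhdsWithin,
    nhdsWithin_le_nhds (eventually_spectrum_subset hU haU)] with b hb hbU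
  rw [cfc_sub_cfc_eq_sum ha hb hfin (hg.continuousOn.mono hbU) fun s hs => (hdslope s hs).mono hbU]
  simp only [coe_restrictScalars', _root_.sum_apply, mulLeftRight_apply, mul_sub,
    ← Finset.sum_sub_distrib]

end CfcDerivative

theorem mem_tangentConeAt_isSelfAdjoint {E : Type*} [AddCommGroup E] [StarAddMonoid E] [Module ℝ E]
    [StarModule ℝ E] [TopologicalSpace E] [ContinuousSMul ℝ E] {x h : E}
    (hx : IsSelfAdjoint x) (hh : IsSelfAdjoint h) :
    h ∈ tangentConeAt ℝ {y | IsSelfAdjoint y} x := by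
  have hconvex : Convex ℝ {y : E | IsSelfAdjoint y} := (selfAdjoint.submodule ℝ E).convex
  simpa only [add_sub_cancel_left] using
    mem_tangentConeAt_of_segment_subset (hconvex.segment_subset hx (hx.add hh))

section MatrixFunction

variable {m n : Type*} [Fintype m] [DecidableEq m] [Fintype n] [DecidableEq n] {g : ℝ → ℝ}

theorem matFun_eq_cfc (g : ℝ → ℝ) (x : Matrix m m ℂ) : matFun g x = cfc g x := by
  unfold matFun
  split_ifs with hx
  · exact (hx.cfc_eq g).symm
  · exact (cfc_apply_of_not_predicate x hx).symm

open scoped Matrix.Norms.L2Operator in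
theorem exists_hasFDerivWithinAt_cfc {U : Set ℝ} (hU : IsOpen U) (hg : DifferentiableOn ℝ g U)
    {x : Matrix m m ℂ} (hx : x.IsHermitian) (hxU : spectrum ℝ x ⊆ U) :
    ∃ D : Matrix m m ℂ →L[ℂ] Matrix m m ℂ, HasFDerivWithinAt (fun y : Matrix m m ℂ => cfc g y)
      (D.restrictScalars ℝ) {y : Matrix m m ℂ | y.IsHermitian} x :=
  ⟨_, hasFDerivWithinAt_cfc hU hg hx finite_real_spectrum hxU⟩

-- `IsFDerivMatFun` refers to the entrywise sup norm, `exists_hasFDerivWithinAt_cfc` to the operator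
-- norm; the little-o condition only depends on the topology, which is the same.
theorem exists_isFDerivMatFun (hg : DifferentiableOn ℝ g (Set.Ioi 0)) {x : Matrix m m ℂ}
    (hx : x.PosDef) : ∃ D, IsFDerivMatFun g x D := by
  have hspec : spectrum ℝ x ⊆ Set.Ioi 0 := by
    rw [hx.1.spectrum_real_eq_range_eigenvalues]
    exact Set.range_subset_iff.mpr hx.eigenvalues_pos
  obtain ⟨D, hD⟩ := exists_hasFDerivWithinAt_cfc isOpen_Ioi hg hx.1 hspec
  refine ⟨D, ?_⟩
  rw [IsFDerivMatFun, funext (matFun_eq_cfc g)]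
  exact ⟨HasFDerivAtFilter.isLittleOTVS hD⟩

theorem matFun_starAlgHom (φ : Matrix m m ℂ →⋆ₐ[ℂ] Matrix n n ℂ) (g : ℝ → ℝ) {x : Matrix m m ℂ}
    (hx : x.IsHermitian) : matFun g (φ x) = φ (matFun g x) := by
  rw [matFun_eq_cfc, matFun_eq_cfc]
  exact (StarAlgHom.map_cfc φ g x (finite_real_spectrum.continuousOn g)
    φ.toAlgHom.toLinearMap.continuous_of_finiteDimensional hx (IsSelfAdjoint.map hx φ)).symm

theorem IsFDerivMatFun.apply_starAlgHom {x : Matrix m m ℂ} (hx : x.IsHermitian)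
    (φ : Matrix m m ℂ →⋆ₐ[ℂ] Matrix n n ℂ) {D : Matrix m m ℂ →L[ℂ] Matrix m m ℂ}
    (hD : IsFDerivMatFun g x D) {D' : Matrix n n ℂ →L[ℂ] Matrix n n ℂ}
    (hD' : IsFDerivMatFun g (φ x) D') (h : Matrix m m ℂ) : D' (φ h) = φ (D h) := by
  let L : Matrix m m ℂ →L[ℂ] Matrix n n ℂ := LinearMap.toContinuousLinearMap (φ : _ →ₗ[ℂ] _)
  have hcomp : HasFDerivWithinAt (fun y => matFun g (φ y)) ((D' ∘L L).restrictScalars ℝ)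
      {y | y.IsHermitian} x :=
    hD'.comp x (L.restrictScalars ℝ).hasFDerivWithinAt fun y hy => IsSelfAdjoint.map hy φ
  have hmap : HasFDerivWithinAt (fun y => matFun g (φ y)) ((L ∘L D).restrictScalars ℝ)
      {y | y.IsHermitian} x :=
    ((L.restrictScalars ℝ).hasFDerivAt.comp_hasFDerivWithinAt x hD).congr
      (fun y hy => matFun_starAlgHom φ g hy) (matFun_starAlgHom φ g hx)
  have hherm : ∀ k : Matrix m m ℂ, k.IsHermitian → (D' ∘L L) k = (L ∘L D) k := fun k hk =>
    hcomp.unique_on hmap (mem_tangentConeAt_isSelfAdjoint hx hk)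
  change (D' ∘L L) h = (L ∘L D) h
  rw [← realPart_add_I_smul_imaginaryPart h, map_add, map_add, map_smul, map_smul,
    hherm _ (realPart h).2, hherm _ (imaginaryPart h).2]

theorem IsFDerivMatFun.unique {x : Matrix m m ℂ} (hx : x.IsHermitian)
    {D D' : Matrix m m ℂ →L[ℂ] Matrix m m ℂ} (hD : IsFDerivMatFun g x D)
    (hD' : IsFDerivMatFun g x D') : D' = D :=
  ContinuousLinearMap.ext fun h => hD.apply_starAlgHom hx (StarAlgHom.id ℂ _) hD' h

theorem IsFDerivMatFun.conjTranspose_mul_apply_starAlgHom {x : Matrix m m ℂ} (hx : x.IsHermitian)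
    (φ : Matrix m m ℂ →⋆ₐ[ℂ] Matrix n n ℂ) {D : Matrix m m ℂ →L[ℂ] Matrix m m ℂ}
    (hD : IsFDerivMatFun g x D) {D' : Matrix n n ℂ →L[ℂ] Matrix n n ℂ}
    (hD' : IsFDerivMatFun g (φ x) D') (h : Matrix m m ℂ) :
    (φ h)ᴴ * D' (φ h) = φ (hᴴ * D h) := by
  rw [hD.apply_starAlgHom hx φ hD', map_mul, ← star_eq_conjTranspose, ← star_eq_conjTranspose,
    map_star]

end MatrixFunction

section Expectation

open scoped BigOperators
open Finset

section Jensen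

variable {E κ : Type*} [AddCommGroup E] [Module ℝ E] [Module ℚ≥0 E] [Fintype κ] {s : Set E}

theorem expect_eq_sum_inv_card_smul (q : κ → E) :
    𝔼 w, q w = ∑ w, (Fintype.card κ : ℝ)⁻¹ • q w := by
  rw [expect_univ, ← smul_sum]
  simp [← NNRat.cast_smul_eq_nnqsmul ℝ]

theorem convexOn_map_expect_le [Nonempty κ] {f : E → ℝ} (hf : ConvexOn ℝ s f) {q : κ → E}
    (hq : ∀ w, q w ∈ s) : f (𝔼 w, q w) ≤ 𝔼 w, f (q w) := by
  rw [expect_eq_sum_inv_card_smul, expect_eq_sum_inv_card_smul]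
  exact hf.map_sum_le (fun _ _ => by positivity) (by simp) fun w _ => hq w

end Jensen

variable {n : Type*} [Fintype n] [DecidableEq n]

theorem expect_sign_mul_sign {R : Type*} [DivisionRing R] [CharZero R] (k l : n) :
    𝔼 s : n → ℤˣ, ((s k : ℤ) : R) * ((s l : ℤ) : R) = if k = l then 1 else 0 := by
  split_ifs with hkl
  · subst hkl
    simp [← Int.cast_mul, ← Units.val_mul]
  · -- flipping the sign at `k` negates the summand
    refine self_eq_neg.mp ?_
    rw [← expect_neg_distrib]
    refine Fintype.expect_equiv (Equiv.mulLeft (Pi.mulSingle k (-1))) _ _ fun s => ?_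
    simp [Ne.symm hkl]

theorem expect_perm_apply {M : Type*} [AddCommMonoid M] [Module ℚ≥0 M] (g : n → M) (k : n) :
    𝔼 σ : Equiv.Perm n, g (σ k) = 𝔼 i, g i := by
  have : Nonempty n := ⟨k⟩
  calc 𝔼 σ : Equiv.Perm n, g (σ k)
      = 𝔼 _i : n, 𝔼 σ : Equiv.Perm n, g (σ k) := (Fintype.expect_const _).symm
    _ = 𝔼 i, 𝔼 σ : Equiv.Perm n, g (σ i) := expect_congr rfl fun i _ =>
        Fintype.expect_equiv (Equiv.mulRight (Equiv.swap k i)) _ _ fun σ => by simp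
    _ = 𝔼 σ : Equiv.Perm n, 𝔼 i, g (σ i) := expect_comm _ _ _
    _ = 𝔼 _σ : Equiv.Perm n, 𝔼 i, g i := expect_congr rfl fun σ _ =>
        Fintype.expect_equiv σ _ _ fun _ => rfl
    _ = 𝔼 i, g i := Fintype.expect_const _

theorem expect_matrix_apply {l m κ : Type*} [Fintype κ] (M : κ → Matrix l m ℂ) (i : l) (j : m) :
    (𝔼 w, M w) i j = 𝔼 w, M w i j :=
  map_expect (entryLinearMap ℚ≥0 ℂ i j) M univ

end Expectation

section UnitaryOneDesign

open scoped BigOperators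
open Finset

variable {n : Type*} [Fintype n] [DecidableEq n]

/-- A finite family of unitary matrices is a one-design if averaging the conjugates of any matrix
over the family has the same effect as averaging over the whole unitary group. -/
def IsUnitaryOneDesign {κ : Type*} [Fintype κ] (V : κ → unitaryGroup n ℂ) : Prop :=
  ∀ X : Matrix n n ℂ,
    𝔼 w, (V w : Matrix n n ℂ) * X * (V w : Matrix n n ℂ)ᴴ = (X.trace / Fintype.card n) • 1

theorem diagonal_mul_permMatrix_mem_unitaryGroup (s : n → ℤˣ) (σ : Equiv.Perm n) :
    diagonal (fun i => ((s i : ℤ) : ℂ)) * σ.permMatrix ℂ ∈ unitaryGroup n ℂ := by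
  have hs : diagonal (fun i => ((s i : ℤ) : ℂ)) ∈ unitaryGroup n ℂ := by
    rw [mem_unitaryGroup_iff, star_eq_conjTranspose, diagonal_conjTranspose, diagonal_mul_diagonal]
    simp [← Int.cast_mul, ← Units.val_mul]
  have hσ : σ.permMatrix ℂ ∈ unitaryGroup n ℂ := by
    rw [mem_unitaryGroup_iff, star_eq_conjTranspose, conjTranspose_permMatrix, ← permMatrix_mul,
      inv_mul_cancel, permMatrix_one]
  exact mul_mem hs hσ

/-- The signed permutation matrix of `(σ, s)`, with entry `s k` at `(k, σ k)`. -/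
def signedPermMatrix (w : Equiv.Perm n × (n → ℤˣ)) : unitaryGroup n ℂ :=
  ⟨diagonal (fun i => ((w.2 i : ℤ) : ℂ)) * w.1.permMatrix ℂ,
    diagonal_mul_permMatrix_mem_unitaryGroup w.2 w.1⟩

theorem signedPermMatrix_conj_apply (w : Equiv.Perm n × (n → ℤˣ)) (X : Matrix n n ℂ) (k l : n) :
    ((signedPermMatrix w : Matrix n n ℂ) * X * (signedPermMatrix w : Matrix n n ℂ)ᴴ) k l =
      X (w.1 k) (w.1 l) * (((w.2 k : ℤ) : ℂ) * ((w.2 l : ℤ) : ℂ)) := by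
  rw [signedPermMatrix, conjTranspose_mul, diagonal_conjTranspose, conjTranspose_permMatrix,
    Matrix.mul_assoc, Matrix.mul_assoc, diagonal_mul, ← Matrix.mul_assoc, ← Matrix.mul_assoc,
    mul_diagonal, PEquiv.mul_toMatrix_toPEquiv, PEquiv.toMatrix_toPEquiv_mul]
  simp only [submatrix_apply, id, Equiv.Perm.inv_def, Equiv.symm_symm, Pi.star_apply, star_intCast]
  ring

theorem isUnitaryOneDesign_signedPermMatrix :
    IsUnitaryOneDesign (signedPermMatrix : Equiv.Perm n × (n → ℤˣ) → unitaryGroup n ℂ) := by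
  refine fun X => Matrix.ext fun k l => ?_
  rw [expect_matrix_apply]
  simp only [signedPermMatrix_conj_apply]
  rw [← univ_product_univ, expect_product]
  simp only [← mul_expect, expect_sign_mul_sign, Matrix.smul_apply, Matrix.one_apply]
  split_ifs with hkl
  · subst hkl
    simp only [mul_one, smul_eq_mul]
    rw [expect_perm_apply (fun i => X i i), Fintype.expect_eq_sum_div_card]
    rfl
  · simp

end UnitaryOneDesign

section PartialTrace

open scoped BigOperators Kronecker

variable {m n : Type*}

theorem one_kronecker_mul_mul_one_kronecker_apply [Fintype m] [DecidableEq m] [Fintype n]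
    (B C : Matrix n n ℂ) (A : Matrix (m × n) (m × n) ℂ) (i j : m) (k l : n) :
    ((1 : Matrix m m ℂ) ⊗ₖ B * A * (1 : Matrix m m ℂ) ⊗ₖ C) (i, k) (j, l) =
      (B * A.submatrix (Prod.mk i) (Prod.mk j) * C) k l := by
  simp [mul_apply, Fintype.sum_prod_type, one_apply]

theorem posDef_ptrace [Fintype n] [Nonempty n] {A : Matrix (m × n) (m × n) ℂ} (hA : A.PosDef) :
    (ptrace A).PosDef := by
  have hsum : ptrace A = ∑ k, A.submatrix (·, k) (·, k) := by
    ext i j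
    simp [ptrace, Matrix.sum_apply]
  rw [hsum]
  exact posDef_sum Finset.univ_nonempty fun k _ => hA.submatrix (Prod.mk_left_injective k)

theorem IsUnitaryOneDesign.expect_one_kronecker_conj [Fintype m] [DecidableEq m]
    [Fintype n] [DecidableEq n] {κ : Type*} [Fintype κ]
    {V : κ → unitaryGroup n ℂ} (hV : IsUnitaryOneDesign V) (A : Matrix (m × n) (m × n) ℂ) :
    𝔼 w, (1 : Matrix m m ℂ) ⊗ₖ (V w : Matrix n n ℂ) * ((Fintype.card n : ℂ) • A) *
      ((1 : Matrix m m ℂ) ⊗ₖ (V w : Matrix n n ℂ))ᴴ = ptrace A ⊗ₖ 1 := by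
  refine Matrix.ext fun ⟨i, k⟩ ⟨j, l⟩ => ?_
  have hcard : (Fintype.card n : ℂ) ≠ 0 := Nat.cast_ne_zero.mpr (Fintype.card_pos_iff.mpr ⟨k⟩).ne'
  simp only [expect_matrix_apply, conjTranspose_kronecker, conjTranspose_one,
    one_kronecker_mul_mul_one_kronecker_apply]
  rw [← expect_matrix_apply, hV, submatrix_smul, Pi.smul_apply, Pi.smul_apply, trace_smul,
    smul_eq_mul, mul_div_cancel_left₀ _ hcard]
  rfl

/-- The star algebra embedding `A ↦ A ⊗ 1` of the observables of the first tensor factor into those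
of the tensor product. -/
def kroneckerOne (m n : Type*) [Fintype m] [DecidableEq m] [Fintype n] [DecidableEq n] :
    Matrix m m ℂ →⋆ₐ[ℂ] Matrix (m × n) (m × n) ℂ where
  toFun A := A ⊗ₖ 1
  map_one' := one_kronecker_one
  map_mul' A B := by rw [← mul_kronecker_mul, mul_one]
  map_zero' := zero_kronecker _
  map_add' A B := add_kronecker A B 1
  commutes' r := by simp only [Algebra.algebraMap_eq_smul_one, smul_kronecker, one_kronecker_one]
  map_star' A := by simp only [star_eq_conjTranspose, conjTranspose_kronecker, conjTranspose_one]

theorem trace_kroneckerOne [Fintype m] [DecidableEq m] [Fintype n] [DecidableEq n]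
    (A : Matrix m m ℂ) :
    (kroneckerOne m n A).trace = Fintype.card n * A.trace := by
  rw [mul_comm, ← trace_one, ← trace_kronecker]
  rfl

end PartialTrace

section Reindex

variable {m n R : Type*}

theorem trace_reindex [Fintype m] [Fintype n] [AddCommMonoid R] (e : m ≃ n) (A : Matrix m m R) :
    (reindex e e A).trace = A.trace :=
  e.symm.sum_comp fun i => A i i

theorem posDef_reindex [Ring R] [PartialOrder R] [StarRing R] (e : m ≃ n) {A : Matrix m m R} :
    (reindex e e A).PosDef ↔ A.PosDef :=
  ⟨fun hA => by simpa using hA.submatrix e.injective, fun hA => hA.submatrix e.symm.injective⟩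

end Reindex

section MatrixEntropy

open scoped BigOperators Kronecker

variable {m n : Type*} [Fintype m] [DecidableEq m] [Fintype n] [DecidableEq n]
  {f f' : ℝ → ℝ}

/-- Reindexing of square matrices along a bijection of the index types, as an isomorphism of star
algebras. -/
def reindexStarAlgEquiv (e : m ≃ n) : Matrix m m ℂ ≃⋆ₐ[ℂ] Matrix n n ℂ :=
  .ofAlgEquiv (reindexAlgEquiv ℂ ℂ e) fun A => (conjTranspose_reindex e e A).symm

theorem IsMatrixEntropy.differentiableOn (hf : IsMatrixEntropy f f') :
    DifferentiableOn ℝ f' (Set.Ioi 0) := by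
  have hderiv : ContDiffOn ℝ 1 (deriv f) (Set.Ioi 0) :=
    ((contDiffOn_succ_iff_deriv_of_isOpen (n := 1) isOpen_Ioi).mp
      (one_add_one_eq_two (R := WithTop ℕ∞) ▸ hf.1)).2.2
  exact (hderiv.differentiableOn one_ne_zero).congr fun t ht => (hf.2.1 t ht).deriv.symm

theorem IsMatrixEntropy.exists_forall_isFDerivMatFun (hf : IsMatrixEntropy f f') :
    ∃ D : Matrix m m ℂ → Matrix m m ℂ →L[ℂ] Matrix m m ℂ,
      ∀ x, x.PosDef → IsFDerivMatFun f' x (D x) := by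
  choose! D hD using fun (x : Matrix m m ℂ) (hx : x.PosDef) =>
    exists_isFDerivMatFun hf.differentiableOn hx
  exact ⟨D, hD⟩

theorem IsMatrixEntropy.convexOn (hf : IsMatrixEntropy f f')
    {D : Matrix m m ℂ → Matrix m m ℂ →L[ℂ] Matrix m m ℂ}
    (hD : ∀ x, x.PosDef → IsFDerivMatFun f' x (D x)) :
    ConvexOn ℝ {q : Matrix m m ℂ × Matrix m m ℂ | q.1.PosDef}
      (fun q => (trace (q.2ᴴ * D q.1 q.2)).re) := by
  let e := Fintype.equivFin m
  let φ := reindexLinearEquiv ℝ ℂ e e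
  obtain ⟨E, hE⟩ := hf.exists_forall_isFDerivMatFun (m := Fin (Fintype.card m))
  have hset : (φ.toLinearMap.prodMap φ.toLinearMap) ⁻¹' {q | q.1.PosDef} = {q | q.1.PosDef} :=
    Set.ext fun q => posDef_reindex e
  have hconvex := (hf.2.2 _ E hE).comp_linearMap (φ.toLinearMap.prodMap φ.toLinearMap)
  rw [hset] at hconvex
  refine hconvex.congr fun q hq => ?_
  have hequivariant := (hD q.1 hq).conjTranspose_mul_apply_starAlgHom hq.1
    (reindexStarAlgEquiv e : Matrix m m ℂ →⋆ₐ[ℂ] _) (hE _ ((posDef_reindex e).mpr hq)) q.2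
  exact congrArg Complex.re <| (congrArg trace hequivariant).trans (trace_reindex e _)

theorem trace_conjStarAlgAut (U : unitaryGroup n ℂ) (A : Matrix n n ℂ) :
    (Unitary.conjStarAlgAut ℂ (Matrix n n ℂ) U A).trace = A.trace := by
  rw [Unitary.conjStarAlgAut_apply, trace_mul_cycle, Unitary.coe_star_mul_self, one_mul]

theorem IsMatrixEntropy.re_trace_expect_conj_le (hf : IsMatrixEntropy f f')
    {D : Matrix n n ℂ → Matrix n n ℂ →L[ℂ] Matrix n n ℂ}
    (hD : ∀ x, x.PosDef → IsFDerivMatFun f' x (D x)) {κ : Type*} [Fintype κ] [Nonempty κ]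
    (U : κ → unitaryGroup n ℂ) {x : Matrix n n ℂ} (hx : x.PosDef) (h : Matrix n n ℂ) :
    letI Φ (A : Matrix n n ℂ) := 𝔼 w, (U w : Matrix n n ℂ) * A * (U w : Matrix n n ℂ)ᴴ
    (trace ((Φ h)ᴴ * D (Φ x) (Φ h))).re ≤ (trace (hᴴ * D x h)).re := by
  let φ (w : κ) : Matrix n n ℂ →⋆ₐ[ℂ] Matrix n n ℂ := Unitary.conjStarAlgAut ℂ _ (U w)
  have hposDef (w : κ) : (φ w x).PosDef :=
    (Unitary.isUnit_coe).posDef_star_right_conjugate_iff.mpr hx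
  have hinvariant (w : κ) :
      (trace ((φ w h)ᴴ * D (φ w x) (φ w h))).re = (trace (hᴴ * D x h)).re := by
    rw [(hD x hx).conjTranspose_mul_apply_starAlgHom hx.1 (φ w) (hD _ (hposDef w))]
    exact congrArg Complex.re (trace_conjStarAlgAut (U w) _)
  have hpair : 𝔼 w, (φ w x, φ w h) = (𝔼 w, φ w x, 𝔼 w, φ w h) :=
    Prod.ext (map_expect (LinearMap.fst ℚ≥0 _ _) _ _) (map_expect (LinearMap.snd ℚ≥0 _ _) _ _)
  have hjensen := convexOn_map_expect_le (hf.convexOn hD) (q := fun w => (φ w x, φ w h)) hposDef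
  rw [hpair] at hjensen
  simp only [hinvariant, Fintype.expect_const] at hjensen
  exact hjensen

theorem IsMatrixEntropy.re_trace_kroneckerOne_ptrace_le (hf : IsMatrixEntropy f f')
    {D : Matrix (m × n) (m × n) ℂ → Matrix (m × n) (m × n) ℂ →L[ℂ] Matrix (m × n) (m × n) ℂ}
    (hD : ∀ x, x.PosDef → IsFDerivMatFun f' x (D x)) {κ : Type*} [Fintype κ] [Nonempty κ]
    {V : κ → unitaryGroup n ℂ} (hV : IsUnitaryOneDesign V) {ρ : Matrix (m × n) (m × n) ℂ}
    (hρ : ((Fintype.card n : ℂ) • ρ).PosDef) (h : Matrix (m × n) (m × n) ℂ) :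
    (trace ((kroneckerOne m n (ptrace h))ᴴ *
        D (kroneckerOne m n (ptrace ρ)) (kroneckerOne m n (ptrace h)))).re ≤
      (trace (((Fintype.card n : ℂ) • h)ᴴ *
        D ((Fintype.card n : ℂ) • ρ) ((Fintype.card n : ℂ) • h))).re := by
  let U (w : κ) : unitaryGroup (m × n) ℂ :=
    ⟨1 ⊗ₖ V w, kronecker_mem_unitary (one_mem _) (V w).2⟩
  have htwirl (A : Matrix (m × n) (m × n) ℂ) :
      𝔼 w, (U w : Matrix (m × n) (m × n) ℂ) * ((Fintype.card n : ℂ) • A) *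
        (U w : Matrix (m × n) (m × n) ℂ)ᴴ = kroneckerOne m n (ptrace A) :=
    hV.expect_one_kronecker_conj A
  have hjensen := hf.re_trace_expect_conj_le hD U hρ ((Fintype.card n : ℂ) • h)
  simpa only [htwirl] using hjensen

end MatrixEntropy

theorem matrixEntropy_partialTrace_fderiv_ineq_general
    {ι₁ ι₂ : Type*} [Fintype ι₁] [DecidableEq ι₁] [Fintype ι₂] [DecidableEq ι₂]
    (f f' : ℝ → ℝ) (hf : IsMatrixEntropy f f')
    (d₂ : ℕ) (hd₂ : d₂ = Fintype.card ι₂)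
    (ρ : Matrix (ι₁ × ι₂) (ι₁ × ι₂) ℂ) (hρ : ρ.PosDef)
    (h : Matrix (ι₁ × ι₂) (ι₁ × ι₂) ℂ)
    (D : Matrix (ι₁ × ι₂) (ι₁ × ι₂) ℂ →L[ℂ] Matrix (ι₁ × ι₂) (ι₁ × ι₂) ℂ)
    (hD : IsFDerivMatFun f' ((d₂ : ℂ) • ρ) D)
    (D₁ : Matrix ι₁ ι₁ ℂ →L[ℂ] Matrix ι₁ ι₁ ℂ)
    (hD₁ : IsFDerivMatFun f' (ptrace ρ) D₁) :
    (Matrix.trace ((ptrace h)ᴴ * D₁ (ptrace h))).re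
      ≤ (d₂ : ℝ) * (Matrix.trace (hᴴ * D h)).re := by
  subst hd₂
  obtain _ | _ := isEmpty_or_nonempty ι₂
  · simp [show ptrace h = 0 from Matrix.ext fun _ _ => Fintype.sum_empty _]
  have hd₂pos : 0 < Fintype.card ι₂ := Fintype.card_pos
  have hdρ : ((Fintype.card ι₂ : ℂ) • ρ).PosDef := hρ.smul (Nat.cast_pos.mpr hd₂pos)
  have hρ₁ : (kroneckerOne ι₁ ι₂ (ptrace ρ)).PosDef := (posDef_ptrace hρ).kronecker .one
  obtain ⟨E, hE⟩ := hf.exists_forall_isFDerivMatFun (m := ι₁ × ι₂)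
  obtain rfl : D = E ((Fintype.card ι₂ : ℂ) • ρ) := (hE _ hdρ).unique hdρ.1 hD
  have hamplified := hD₁.conjTranspose_mul_apply_starAlgHom (posDef_ptrace hρ).1
    (kroneckerOne ι₁ ι₂) (hE _ hρ₁) (ptrace h)
  have htwirled := hf.re_trace_kroneckerOne_ptrace_le hE isUnitaryOneDesign_signedPermMatrix hdρ h
  rw [hamplified, trace_kroneckerOne, map_smul, conjTranspose_smul, star_natCast,
    smul_mul_smul_comm, trace_smul, smul_eq_mul, mul_assoc] at htwirled
  simp only [← Complex.ofReal_natCast, Complex.re_ofReal_mul] at htwirled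
  exact le_of_mul_le_mul_left htwirled (Nat.cast_pos.mpr hd₂pos)

/-- If `f` is a matrix entropy then for every positive definite `ρ` and
self-adjoint `h` on `H = H₁ ⊗ H₂` one has
`Tr₁ (h₁* ⬝ Df'(ρ₁) h₁) ≤ d₂ · Tr₁₂ (h* ⬝ Df'(d₂ρ) h)`, where `ρ₁ = Tr₂ ρ`, `h₁ = Tr₂ h`
and `d₂ = dim H₂`. -/
theorem matrixEntropy_partialTrace_fderiv_ineq
    {ι₁ ι₂ : Type*} [Fintype ι₁] [DecidableEq ι₁] [Fintype ι₂] [DecidableEq ι₂]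
    (f f' : ℝ → ℝ) (hf : IsMatrixEntropy f f')
    (d₂ : ℕ) (hd₂ : d₂ = Fintype.card ι₂)
    (ρ : Matrix (ι₁ × ι₂) (ι₁ × ι₂) ℂ) (hρ : ρ.PosDef)
    (h : Matrix (ι₁ × ι₂) (ι₁ × ι₂) ℂ) (hh : h.IsHermitian)
    (D : Matrix (ι₁ × ι₂) (ι₁ × ι₂) ℂ →L[ℂ] Matrix (ι₁ × ι₂) (ι₁ × ι₂) ℂ)
    (hD : IsFDerivMatFun f' ((d₂ : ℂ) • ρ) D)
    (D₁ : Matrix ι₁ ι₁ ℂ →L[ℂ] Matrix ι₁ ι₁ ℂ)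
    (hD₁ : IsFDerivMatFun f' (ptrace ρ) D₁) :
    (Matrix.trace ((ptrace h)ᴴ * D₁ (ptrace h))).re
      ≤ (d₂ : ℝ) * (Matrix.trace (hᴴ * D h)).re :=
  matrixEntropy_partialTrace_fderiv_ineq_general f f' hf d₂ hd₂ ρ hρ h D hD D₁ hD₁
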